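/- Let Λ ⊂ ℕⁿ be a finite set, v_j ∈ Λ, and n^(1), ..., n^(n) ∈ ℝⁿ linearly independent nonnegative vectors with n^(i)·(v - v_j) ≥ 0 for all v ∈ Λ and all i. Define β = min over v ∈ Λ \ {v_j} of (1/d)(v - v_j)·(n^(1)+...+n^(n)) for a fixed d > 0; then β > 0, and for every N ∈ ℕ and every q of the form q = Σᵢ ((N + kᵢ)/d) n^(i) with kᵢ ≥ 0 (and at least one kᵢ = 0 allowed, here interpreted as k replaced by N in one slot), one has q·(v - v_j) ≥ β N for all v ∈ Λ \ {v_j}. -/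

import Mathlib

open Finset

/-- A vector orthogonal to `n` linearly independent vectors of `ℝⁿ` vanishes. -/
theorem eq_zero_of_forall_sum_mul_eq_zero {n : ℕ} {a : Fin n → Fin n → ℝ}
    (ha : LinearIndependent ℝ a) {w : Fin n → ℝ} (hw : ∀ i, ∑ l, a i l * w l = 0) : w = 0 := by
  have hu : IsUnit (Matrix.of a) := Matrix.linearIndependent_rows_iff_isUnit.mp ha
  apply Matrix.mulVec_injective_iff_isUnit.mpr hu
  rw [Matrix.mulVec_zero]
  exact funext hw

/-- Pairing with a linear combination of vectors is the combination of the pairings. -/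
theorem sum_sum_smul_mul {n : ℕ} (c : Fin n → ℝ) (a : Fin n → Fin n → ℝ) (w : Fin n → ℝ) :
    ∑ l, (∑ i, c i • a i) l * w l = ∑ i, c i * ∑ l, a i l * w l := by
  simp only [Finset.sum_apply, Pi.smul_apply, smul_eq_mul, Finset.sum_mul, Finset.mul_sum]
  rw [Finset.sum_comm]
  simp only [mul_assoc]

/-- Lemma 2.4: with `β = min_{v ∈ Λ \ {v_j}} (1/d)(v - v_j)·(n⁽¹⁾+⋯+n⁽ⁿ⁾)` one has
`β > 0` and `q·(v - v_j) ≥ β N` for every `q = Σᵢ ((N+kᵢ)/d) n⁽ⁱ⁾` and `v ∈ Λ \ {v_j}`. -/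
theorem stmt3 (n : ℕ) (Λ : Finset (Fin n → ℝ))
    (hΛnat : ∀ v ∈ Λ, ∀ i, ∃ m : ℕ, v i = m)
    (vj : Fin n → ℝ) (hvj : vj ∈ Λ)
    (nvec : Fin n → (Fin n → ℝ))
    (hnonneg : ∀ i l, 0 ≤ nvec i l)
    (hli : LinearIndependent ℝ nvec)
    (hconv : ∀ v ∈ Λ, ∀ i, 0 ≤ ∑ l, nvec i l * (v l - vj l))
    (d : ℝ) (hd : 0 < d)
    (hne : (Λ.erase vj).Nonempty)
    (β : ℝ)
    (hβ : IsLeast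
      {x : ℝ | ∃ v ∈ Λ.erase vj, x = (1 / d) * ∑ l, (v l - vj l) * (∑ i, nvec i l)} β) :
    0 < β ∧
      ∀ (N : ℕ) (k : Fin n → ℕ) (q : Fin n → ℝ),
        q = ∑ i, (((N + k i : ℕ) : ℝ) / d) • nvec i →
        ∀ v ∈ Λ, v ≠ vj → β * N ≤ ∑ l, q l * (v l - vj l) := by
  have hswap : ∀ v : Fin n → ℝ, ∑ l, (v l - vj l) * (∑ i, nvec i l) =
      ∑ i, ∑ l, nvec i l * (v l - vj l) := by
    intro v
    simp only [Finset.mul_sum]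
    rw [Finset.sum_comm]
    simp only [mul_comm]
  refine ⟨?_, ?_⟩
  · obtain ⟨v, hv, rfl⟩ := hβ.1
    obtain ⟨hvne, hvΛ⟩ := Finset.mem_erase.mp hv
    rw [hswap]
    refine mul_pos (by positivity) ?_
    refine (Finset.sum_nonneg fun i _ => hconv v hvΛ i).lt_of_ne' fun h0 => hvne ?_
    have hz := (Finset.sum_eq_zero_iff_of_nonneg fun i _ => hconv v hvΛ i).mp h0
    exact sub_eq_zero.mp (eq_zero_of_forall_sum_mul_eq_zero (w := v - vj) hli
      fun i => hz i (Finset.mem_univ i))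
  · rintro N k q rfl v hv hvne
    have hle : β ≤ (1 / d) * ∑ i, ∑ l, nvec i l * (v l - vj l) := by
      rw [← hswap]
      exact hβ.2 ⟨v, Finset.mem_erase.mpr ⟨hvne, hv⟩, rfl⟩
    rw [sum_sum_smul_mul _ _ fun l => v l - vj l]
    calc β * N ≤ (1 / d) * (∑ i, ∑ l, nvec i l * (v l - vj l)) * N := by gcongr
      _ = ∑ i, ((N : ℝ) / d) * ∑ l, nvec i l * (v l - vj l) := by
        rw [← Finset.mul_sum]
        ring
      _ ≤ ∑ i, (((N + k i : ℕ) : ℝ) / d) * ∑ l, nvec i l * (v l - vj l) := by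
        refine Finset.sum_le_sum fun i _ => mul_le_mul_of_nonneg_right ?_ (hconv v hv i)
        gcongr
        exact Nat.le_add_right N (k i)
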